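/- (Monotone decrease and convergence of objective values) If α ≥ L, then along the sequence {Z^t} generated by the proximal network-slimming iteration the objective values satisfy F(Z^{t+1}) ≤ F(Z^t) for every t, and the real sequence {F(Z^t)} converges (being nonincreasing and bounded below by 0). -/

import Mathlib

noncomputable section

/-- Concatenation `W̃ = (W, γ)` of `W ∈ ℝⁿ` and `γ ∈ ℝᶜ` into a single Euclidean vector. -/
def pairWγ {n c : ℕ} (W : EuclideanSpace ℝ (Fin n)) (γ : EuclideanSpace ℝ (Fin c)) :
    EuclideanSpace ℝ (Fin n ⊕ Fin c) :=
  (EuclideanSpace.equiv (Fin n ⊕ Fin c) ℝ).symm (Sum.elim (fun i => W i) (fun j => γ j))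

/-- Partial gradient `∇_W L̃(W, γ)`. -/
def gradW {n c : ℕ} (Lt : EuclideanSpace ℝ (Fin n ⊕ Fin c) → ℝ)
    (W : EuclideanSpace ℝ (Fin n)) (γ : EuclideanSpace ℝ (Fin c)) : EuclideanSpace ℝ (Fin n) :=
  (EuclideanSpace.equiv (Fin n) ℝ).symm (fun i => gradient Lt (pairWγ W γ) (Sum.inl i))

/-- Partial gradient `∇_γ L̃(W, γ)`. -/
def gradG {n c : ℕ} (Lt : EuclideanSpace ℝ (Fin n ⊕ Fin c) → ℝ)
    (W : EuclideanSpace ℝ (Fin n)) (γ : EuclideanSpace ℝ (Fin c)) : EuclideanSpace ℝ (Fin c) :=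
  (EuclideanSpace.equiv (Fin c) ℝ).symm (fun j => gradient Lt (pairWγ W γ) (Sum.inr j))

/-- Soft-thresholding operator `(S(x, τ))_i = sign(x_i) · max{0, |x_i| − τ}`. -/
def softThresh {c : ℕ} (x : EuclideanSpace ℝ (Fin c)) (τ : ℝ) : EuclideanSpace ℝ (Fin c) :=
  (EuclideanSpace.equiv (Fin c) ℝ).symm (fun i => Real.sign (x i) * max 0 (|x i| - τ))

/-- The objective `F(W, γ, ξ) = L̃(W, γ) + λ‖ξ‖₁ + (β/2)‖γ − ξ‖₂²`. -/
def objF {n c : ℕ} (Lt : EuclideanSpace ℝ (Fin n ⊕ Fin c) → ℝ) (lam β : ℝ)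
    (W : EuclideanSpace ℝ (Fin n)) (γ ξ : EuclideanSpace ℝ (Fin c)) : ℝ :=
  Lt (pairWγ W γ) + lam * (∑ i, |ξ i|) + β / 2 * ‖γ - ξ‖ ^ 2

/-!
Each of the three block updates is a proximal step: the new point `u` makes
`α • (v - u) + β • (w - u)` a subgradient at `u` of a convex function `R`, where `v` is the old
point and `w` the point it is coupled to. This holds with `R = ⟪∇_W L̃, ·⟫` and `β = 0` for `W`,
with `R = ⟪∇_γ L̃, ·⟫` and `w = ξ` for `γ`, and with `R = λ‖·‖₁` and `w = γ` for `ξ`. Such a step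
lowers `R + (β / 2) ‖w - ·‖²` by at least `(α + β / 2) ‖v - u‖²`. Replacing the two linear functions
by `L̃` costs at most `L / 2` times the squared length of the step in `W̃`, because `∇L̃` is
`L`-Lipschitz, so the objective decreases as soon as `L ≤ 2 * α`.
-/

section InnerProductSpace

open scoped RealInnerProductSpace

variable {E : Type*} [NormedAddCommGroup E] [InnerProductSpace ℝ E]

theorem apply_add_le_of_gradient_lipschitz [CompleteSpace E] {f : E → ℝ} {L : ℝ}
    (hf : Differentiable ℝ f)
    (hLip : ∀ x y, ‖gradient f x - gradient f y‖ ≤ L * ‖x - y‖) (x d : E) :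
    f (x + d) ≤ f x + ⟪gradient f x, d⟫ + L / 2 * ‖d‖ ^ 2 := by
  have hasDerivAt_line (s : ℝ) :
      HasDerivAt (fun s : ℝ => f (x + s • d)) ⟪gradient f (x + s • d), d⟫ s := by
    have hline : HasDerivAt (fun s : ℝ => x + s • d) d s := by
      simpa using ((hasDerivAt_id s).smul_const d).const_add x
    simpa [Function.comp_def] using
      (hf (x + s • d)).hasGradientAt.hasFDerivAt.comp_hasDerivAt s hline
  have hasDerivAt_quadratic (s : ℝ) :
      HasDerivAt (fun s : ℝ => f x + s * ⟪gradient f x, d⟫ + L / 2 * ‖d‖ ^ 2 * s ^ 2)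
        (⟪gradient f x, d⟫ + L * ‖d‖ ^ 2 * s) s := by
    have hlinear := ((hasDerivAt_id' s).mul_const ⟪gradient f x, d⟫).const_add (f x)
    have hsquare := (hasDerivAt_pow 2 s).const_mul (L / 2 * ‖d‖ ^ 2)
    exact (hlinear.add hsquare).congr_deriv (by push_cast; ring)
  have deriv_le (s : ℝ) (hs : s ∈ Set.Ico (0 : ℝ) 1) :
      ⟪gradient f (x + s • d), d⟫ ≤ ⟪gradient f x, d⟫ + L * ‖d‖ ^ 2 * s := by
    have hgrad : ‖gradient f (x + s • d) - gradient f x‖ ≤ L * (s * ‖d‖) := by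
      simpa [norm_smul, abs_of_nonneg hs.1] using hLip (x + s • d) x
    rw [← sub_le_iff_le_add', ← inner_sub_left]
    calc ⟪gradient f (x + s • d) - gradient f x, d⟫
        ≤ ‖gradient f (x + s • d) - gradient f x‖ * ‖d‖ := real_inner_le_norm _ _
      _ ≤ L * (s * ‖d‖) * ‖d‖ := by gcongr
      _ = L * ‖d‖ ^ 2 * s := by ring
  simpa using image_le_of_deriv_right_le_deriv_boundary
    (fun s _ => (hasDerivAt_line s).continuousAt.continuousWithinAt)
    (fun s _ => (hasDerivAt_line s).hasDerivWithinAt)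
    (by simp)
    (fun s _ => (hasDerivAt_quadratic s).continuousAt.continuousWithinAt)
    (fun s _ => (hasDerivAt_quadratic s).hasDerivWithinAt)
    deriv_le (Set.right_mem_Icc.2 zero_le_one)

theorem proximal_step_decrease {R : E → ℝ} {α β : ℝ} {u v w : E}
    (hR : ⟪α • (v - u) + β • (w - u), v - u⟫ ≤ R v - R u) :
    R u + β / 2 * ‖w - u‖ ^ 2 + (α + β / 2) * ‖v - u‖ ^ 2 ≤ R v + β / 2 * ‖w - v‖ ^ 2 := by
  have hexpand : ‖w - v‖ ^ 2 = ‖w - u‖ ^ 2 - 2 * ⟪w - u, v - u⟫ + ‖v - u‖ ^ 2 := by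
    rw [← norm_sub_sq_real, sub_sub_sub_cancel_right]
  rw [inner_add_left, real_inner_smul_left, real_inner_smul_left,
    real_inner_self_eq_norm_sq] at hR
  rw [hexpand]
  linarith

theorem linear_proximal_step_decrease {α β : ℝ} {g u v w : E}
    (hg : g = α • (v - u) + β • (w - u)) :
    ⟪g, u - v⟫ + β / 2 * ‖w - u‖ ^ 2 + (α + β / 2) * ‖u - v‖ ^ 2 ≤ β / 2 * ‖w - v‖ ^ 2 := by
  have hstep := proximal_step_decrease (R := fun y => ⟪g, y⟫) (α := α) (β := β) (u := u) (v := v)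
    (w := w) (by rw [← hg, inner_sub_right])
  rw [norm_sub_rev v u] at hstep
  rw [inner_sub_right]
  linarith

end InnerProductSpace

section SoftThresholding

variable {c : ℕ} (x : EuclideanSpace ℝ (Fin c))

theorem softThresh_apply (τ : ℝ) (i : Fin c) :
    softThresh x τ i = Real.sign (x i) * max 0 (|x i| - τ) :=
  rfl

theorem abs_sub_softThresh_le {τ : ℝ} (hτ : 0 ≤ τ) (i : Fin c) : |x i - softThresh x τ i| ≤ τ := by
  rw [softThresh_apply]
  rcases lt_trichotomy (x i) 0 with hx | hx | hx
  · rw [Real.sign_of_neg hx, abs_of_neg hx, abs_le]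
    grind
  · simpa [hx] using hτ
  · rw [Real.sign_of_pos hx, abs_of_pos hx, abs_le]
    grind

theorem sub_softThresh_mul_softThresh (τ : ℝ) (i : Fin c) :
    (x i - softThresh x τ i) * softThresh x τ i = τ * |softThresh x τ i| := by
  rw [softThresh_apply]
  rcases le_total (|x i| - τ) 0 with hle | hge
  · simp [max_eq_left hle]
  rw [max_eq_right hge]
  rcases lt_trichotomy (x i) 0 with hx | hx | hx
  · rw [abs_of_neg hx] at hge ⊢
    rw [Real.sign_of_neg hx, neg_one_mul, abs_neg, abs_of_nonneg hge]
    ring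
  · simp [hx]
  · rw [abs_of_pos hx] at hge ⊢
    rw [Real.sign_of_pos hx, one_mul, abs_of_nonneg hge]
    ring

theorem inner_sub_softThresh_le {τ : ℝ} (hτ : 0 ≤ τ) (v : EuclideanSpace ℝ (Fin c)) :
    inner ℝ (x - softThresh x τ) (v - softThresh x τ) ≤
      τ * ∑ i, |v i| - τ * ∑ i, |softThresh x τ i| := by
  rw [PiLp.inner_apply, Finset.mul_sum, Finset.mul_sum, ← Finset.sum_sub_distrib]
  refine Finset.sum_le_sum fun i _ => ?_
  have hv : (x i - softThresh x τ i) * v i ≤ τ * |v i| :=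
    calc (x i - softThresh x τ i) * v i
        ≤ |x i - softThresh x τ i| * |v i| := by
          rw [← abs_mul]
          exact le_abs_self _
      _ ≤ τ * |v i| := by
          gcongr
          exact abs_sub_softThresh_le x hτ i
  simp only [PiLp.sub_apply, RCLike.inner_apply, conj_trivial]
  linarith [sub_softThresh_mul_softThresh x τ i]

end SoftThresholding

section Concatenation

variable {n c : ℕ} (W W' : EuclideanSpace ℝ (Fin n)) (γ γ' : EuclideanSpace ℝ (Fin c))

theorem norm_sq_pairWγ_sub_pairWγ :
    ‖pairWγ W' γ' - pairWγ W γ‖ ^ 2 = ‖W' - W‖ ^ 2 + ‖γ' - γ‖ ^ 2 := by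
  simp [EuclideanSpace.real_norm_sq_eq, pairWγ]

theorem inner_gradient_pairWγ_sub_pairWγ (Lt : EuclideanSpace ℝ (Fin n ⊕ Fin c) → ℝ) :
    inner ℝ (gradient Lt (pairWγ W γ)) (pairWγ W' γ' - pairWγ W γ) =
      inner ℝ (gradW Lt W γ) (W' - W) + inner ℝ (gradG Lt W γ) (γ' - γ) := by
  simp only [PiLp.inner_apply, Fintype.sum_sum_type]
  rfl

theorem apply_pairWγ_le_of_gradient_lipschitz {Lt : EuclideanSpace ℝ (Fin n ⊕ Fin c) → ℝ} {L : ℝ}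
    (hdiff : Differentiable ℝ Lt)
    (hLip : ∀ x y, ‖gradient Lt x - gradient Lt y‖ ≤ L * ‖x - y‖) :
    Lt (pairWγ W' γ') ≤ Lt (pairWγ W γ) +
      (inner ℝ (gradW Lt W γ) (W' - W) + inner ℝ (gradG Lt W γ) (γ' - γ)) +
      L / 2 * (‖W' - W‖ ^ 2 + ‖γ' - γ‖ ^ 2) := by
  rw [← inner_gradient_pairWγ_sub_pairWγ, ← norm_sq_pairWγ_sub_pairWγ]
  simpa using apply_add_le_of_gradient_lipschitz hdiff hLip (pairWγ W γ)
    (pairWγ W' γ' - pairWγ W γ)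

end Concatenation

section Iteration

variable {n c : ℕ} {L lam α β : ℝ} {Lt : EuclideanSpace ℝ (Fin n ⊕ Fin c) → ℝ}

theorem softThresh_step_decrease {γ ξ ξ' : EuclideanSpace ℝ (Fin c)} (hlam : 0 ≤ lam)
    (hαβ : 0 < α + β)
    (hξ : ξ' = softThresh ((1 / (α + β)) • (α • ξ + β • γ)) (lam / (α + β))) :
    lam * ∑ i, |ξ' i| + β / 2 * ‖γ - ξ'‖ ^ 2 + (α + β / 2) * ‖ξ' - ξ‖ ^ 2 ≤
      lam * ∑ i, |ξ i| + β / 2 * ‖γ - ξ‖ ^ 2 := by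
  rw [norm_sub_rev ξ' ξ]
  refine proximal_step_decrease (R := fun η : EuclideanSpace ℝ (Fin c) => lam * ∑ i, |η i|) ?_
  have hsub := inner_sub_softThresh_le ((1 / (α + β)) • (α • ξ + β • γ))
    (div_nonneg hlam hαβ.le) ξ
  rw [← hξ] at hsub
  have hscale : α • (ξ - ξ') + β • (γ - ξ') =
      (α + β) • ((1 / (α + β)) • (α • ξ + β • γ) - ξ') := by
    match_scalars <;> field_simp
    ring
  calc inner ℝ (α • (ξ - ξ') + β • (γ - ξ')) (ξ - ξ')
      = (α + β) * inner ℝ ((1 / (α + β)) • (α • ξ + β • γ) - ξ') (ξ - ξ') := by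
        rw [hscale, real_inner_smul_left]
    _ ≤ (α + β) * (lam / (α + β) * ∑ i, |ξ i| - lam / (α + β) * ∑ i, |ξ' i|) := by gcongr
    _ = lam * ∑ i, |ξ i| - lam * ∑ i, |ξ' i| := by field_simp

theorem objF_sufficient_decrease {W W' : EuclideanSpace ℝ (Fin n)}
    {γ γ' ξ ξ' : EuclideanSpace ℝ (Fin c)} (hlam : 0 ≤ lam) (hα : α ≠ 0) (hαβ : 0 < α + β)
    (hdiff : Differentiable ℝ Lt)
    (hLip : ∀ x y, ‖gradient Lt x - gradient Lt y‖ ≤ L * ‖x - y‖)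
    (hW : W' = W - (1 / α) • gradW Lt W γ)
    (hγ : γ' = (1 / (α + β)) • (α • γ + β • ξ) - (1 / (α + β)) • gradG Lt W γ)
    (hξ : ξ' = softThresh ((1 / (α + β)) • (α • ξ + β • γ')) (lam / (α + β))) :
    objF Lt lam β W' γ' ξ' + (α - L / 2) * ‖W' - W‖ ^ 2 +
        (α + β / 2 - L / 2) * ‖γ' - γ‖ ^ 2 + (α + β / 2) * ‖ξ' - ξ‖ ^ 2 ≤
      objF Lt lam β W γ ξ := by
  have hgradW : gradW Lt W γ = α • (W - W') := by
    rw [hW]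
    match_scalars <;> field_simp
    ring
  have hgradG : gradG Lt W γ = α • (γ - γ') + β • (ξ - γ') := by
    rw [hγ]
    match_scalars <;> field_simp <;> ring
  have hsmooth := apply_pairWγ_le_of_gradient_lipschitz W W' γ γ' hdiff hLip
  have hstepW := linear_proximal_step_decrease (β := 0) (w := W') (by simpa using hgradW)
  have hstepγ := linear_proximal_step_decrease hgradG
  have hstepξ := softThresh_step_decrease hlam hαβ hξ
  rw [norm_sub_rev ξ γ', norm_sub_rev ξ γ] at hstepγ
  unfold objF
  linarith

theorem bddBelow_range_objF {ι : Type*} (hlam : 0 ≤ lam) (hβ : 0 ≤ β)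
    (hbdd : BddBelow (Set.range Lt)) (W : ι → EuclideanSpace ℝ (Fin n))
    (γ ξ : ι → EuclideanSpace ℝ (Fin c)) :
    BddBelow (Set.range fun t => objF Lt lam β (W t) (γ t) (ξ t)) := by
  obtain ⟨m, hm⟩ := hbdd
  refine ⟨m, Set.forall_mem_range.2 fun t => ?_⟩
  have hLt : m ≤ Lt (pairWγ (W t) (γ t)) := hm (Set.mem_range_self _)
  have hpenalty : 0 ≤ lam * ∑ i, |ξ t i| := by positivity
  have hcoupling : 0 ≤ β / 2 * ‖γ t - ξ t‖ ^ 2 := by positivity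
  unfold objF
  linarith

end Iteration

theorem monotone_decrease_and_convergence_general
    {n c : ℕ} {L lam α β : ℝ} (hlam : 0 ≤ lam) (hα : 0 < α) (hβ : 0 ≤ β) (hαL : L ≤ 2 * α)
    {Lt : EuclideanSpace ℝ (Fin n ⊕ Fin c) → ℝ}
    (hdiff : Differentiable ℝ Lt)
    (hbdd : BddBelow (Set.range Lt))
    (hLip : ∀ x y, ‖gradient Lt x - gradient Lt y‖ ≤ L * ‖x - y‖)
    {W : ℕ → EuclideanSpace ℝ (Fin n)} {γ ξ : ℕ → EuclideanSpace ℝ (Fin c)}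
    (hW : ∀ t, W (t + 1) = W t - (1 / α) • gradW Lt (W t) (γ t))
    (hγ : ∀ t, γ (t + 1) =
      (1 / (α + β)) • (α • γ t + β • ξ t) - (1 / (α + β)) • gradG Lt (W t) (γ t))
    (hξ : ∀ t, ξ (t + 1) =
      softThresh ((1 / (α + β)) • (α • ξ t + β • γ (t + 1))) (lam / (α + β))) :
    (∀ t : ℕ, objF Lt lam β (W (t + 1)) (γ (t + 1)) (ξ (t + 1)) ≤
      objF Lt lam β (W t) (γ t) (ξ t)) ∧
    ∃ l : ℝ, Filter.Tendsto (fun t : ℕ => objF Lt lam β (W t) (γ t) (ξ t))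
      Filter.atTop (nhds l) := by
  have hmono (t : ℕ) : objF Lt lam β (W (t + 1)) (γ (t + 1)) (ξ (t + 1)) ≤
      objF Lt lam β (W t) (γ t) (ξ t) := by
    have hdecrease := objF_sufficient_decrease hlam hα.ne' (by positivity) hdiff hLip
      (hW t) (hγ t) (hξ t)
    have hgainW : 0 ≤ (α - L / 2) * ‖W (t + 1) - W t‖ ^ 2 :=
      mul_nonneg (by linarith) (sq_nonneg _)
    have hgainγ : 0 ≤ (α + β / 2 - L / 2) * ‖γ (t + 1) - γ t‖ ^ 2 :=
      mul_nonneg (by linarith) (sq_nonneg _)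
    have hgainξ : 0 ≤ (α + β / 2) * ‖ξ (t + 1) - ξ t‖ ^ 2 := by positivity
    linarith
  exact ⟨hmono, _, tendsto_atTop_ciInf (antitone_nat_of_succ_le hmono)
    (bddBelow_range_objF hlam hβ hbdd W γ ξ)⟩

/-- (Monotone decrease and convergence of objective values.) -/
theorem monotone_decrease_and_convergence
    (n c : ℕ) (hn : 0 < n) (hc : 0 < c)
    (L lam α β : ℝ) (hL : 0 < L) (hlam : 0 < lam) (hα : 0 < α) (hβ : 0 < β)
    (hαL : L ≤ α)
    (Lt : EuclideanSpace ℝ (Fin n ⊕ Fin c) → ℝ)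
    (hdiff : Differentiable ℝ Lt)
    (hnonneg : ∀ x, 0 ≤ Lt x)
    (hLip : ∀ x y, ‖gradient Lt x - gradient Lt y‖ ≤ L * ‖x - y‖)
    (W : ℕ → EuclideanSpace ℝ (Fin n)) (γ ξ : ℕ → EuclideanSpace ℝ (Fin c))
    (hW : ∀ t, W (t + 1) = W t - (1 / α) • gradW Lt (W t) (γ t))
    (hγ : ∀ t, γ (t + 1) =
      (1 / (α + β)) • (α • γ t + β • ξ t) - (1 / (α + β)) • gradG Lt (W t) (γ t))
    (hξ : ∀ t, ξ (t + 1) =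
      softThresh ((1 / (α + β)) • (α • ξ t + β • γ (t + 1))) (lam / (α + β))) :
    (∀ t : ℕ, objF Lt lam β (W (t + 1)) (γ (t + 1)) (ξ (t + 1)) ≤
      objF Lt lam β (W t) (γ t) (ξ t)) ∧
    ∃ l : ℝ, Filter.Tendsto (fun t : ℕ => objF Lt lam β (W t) (γ t) (ξ t))
      Filter.atTop (nhds l) := by
  exact monotone_decrease_and_convergence_general hlam.le hα hβ.le (by linarith) hdiff
    ⟨0, Set.forall_mem_range.2 hnonneg⟩ hLip hW hγ hξ
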